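/- arXiv:1612.06591 — 2 statements merged into one kernel-verified Lean document; each statement's English description precedes it below -/
import Mathlib

section
/- The map ν ↦ η_ν is real-analytic on the interval [0,1] and monotonically decreasing on [0,1] (in particular η_0 = 1 and η_1 = π(4−√13)/(3(4−π))). -/
/-- Υ_ν := √(1 − ν²). -/
noncomputable def Ups (ν : ℝ) : ℝ := Real.sqrt (1 - ν ^ 2)

/-- w_ν := Υ_ν · cot(π Υ_ν / 2) for ν ∈ [0,1), with w_1 := 2/π (continuous extension). -/
noncomputable def w (ν : ℝ) : ℝ :=
  if ν = 1 then 2 / Real.pi else Ups ν * Real.cot (Real.pi * Ups ν / 2)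

/-- η_ν := (√(9+4ν²) − 4ν)/(3(1 − 2 w_ν)) for ν ≠ √3/2, and η_{√3/2} := 1/(√3 (π−2)). -/
noncomputable def eta (ν : ℝ) : ℝ :=
  if ν = Real.sqrt 3 / 2 then 1 / (Real.sqrt 3 * (Real.pi - 2))
  else (Real.sqrt (9 + 4 * ν ^ 2) - 4 * ν) / (3 * (1 - 2 * w ν))

noncomputable def qn (n : ℕ) : ℝ := 4 * ((n : ℝ) + 1) ^ 2

lemma qn_ge (n : ℕ) : 4 ≤ qn n := by
  unfold qn
  have : (0 : ℝ) ≤ n := n.cast_nonneg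
  nlinarith

/-- The series `∑ q / ((q - 1/4) (q - u))`, `q = 4 n²`. -/
noncomputable def Sser (u : ℝ) : ℝ := ∑' n : ℕ, qn n / ((qn n - 1 / 4) * (qn n - u))

noncomputable def Tser (u : ℝ) : ℝ := ∑' n : ℕ, u / (qn n - u)

lemma summable_base : Summable (fun n : ℕ => 4 / qn n) := by
  have h := (summable_nat_add_iff 1).2 (Real.summable_one_div_nat_pow.2 (one_lt_two))
  refine h.congr fun n => ?_
  unfold qn
  push_cast
  field_simp

lemma summable_T {u : ℝ} (h0 : 0 ≤ u) (h1 : u ≤ 1) : Summable (fun n : ℕ => u / (qn n - u)) := by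
  refine Summable.of_nonneg_of_le (fun n => ?_) (fun n => ?_) summable_base
  · have := qn_ge n
    exact div_nonneg h0 (by linarith)
  · have := qn_ge n
    rw [div_le_div_iff₀ (by linarith) (by linarith)]
    nlinarith

lemma term_pos {u : ℝ} (h1 : u ≤ 1) (n : ℕ) : 0 < qn n / ((qn n - 1 / 4) * (qn n - u)) := by
  have := qn_ge n
  exact div_pos (by linarith) (mul_pos (by linarith) (by linarith))

lemma summable_S {u : ℝ} (h1 : u ≤ 1) :
    Summable (fun n : ℕ => qn n / ((qn n - 1 / 4) * (qn n - u))) := by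
  refine Summable.of_nonneg_of_le (fun n => (term_pos h1 n).le) (fun n => ?_) summable_base
  have := qn_ge n
  rw [div_le_div_iff₀ (mul_pos (by linarith) (by linarith)) (by linarith)]
  have h2 : (qn n - 1 / 4) * (qn n - 1) ≤ (qn n - 1 / 4) * (qn n - u) :=
    mul_le_mul_of_nonneg_left (by linarith) (by linarith)
  nlinarith

lemma Sser_pos {u : ℝ} (h1 : u ≤ 1) : 0 < Sser u :=
  (summable_S h1).tsum_pos (fun n => (term_pos h1 n).le) 0 (term_pos h1 0)

lemma T_sub {u : ℝ} (h0 : 0 ≤ u) (h1 : u ≤ 1) :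
    Tser u - Tser (1 / 4) = (u - 1 / 4) * Sser u := by
  unfold Tser Sser
  rw [← (summable_T h0 h1).tsum_sub (summable_T (by norm_num) (by norm_num)), ← tsum_mul_left]
  congr 1
  ext n
  have := qn_ge n
  have h2 : qn n - u ≠ 0 := by linarith
  have h3 : qn n - 1 / 4 ≠ 0 := by linarith
  rw [div_sub_div _ _ h2 h3, ← mul_div_assoc (u - 1 / 4),
    div_eq_div_iff (mul_ne_zero h2 h3) (mul_ne_zero h3 h2)]
  ring

lemma cot_T {y : ℝ} (h0 : 0 < y) (h1 : y ≤ 1) :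
    y * (Real.pi * Real.cot (Real.pi * y / 2)) - 2 = -4 * Tser (y ^ 2) := by
  have hz : ((y / 2 : ℝ) : ℂ) ∈ Complex.integerComplement := by
    rintro ⟨k, hk⟩
    have hk' : (k : ℝ) = y / 2 := by exact_mod_cast hk
    have a : (0 : ℝ) < k := by linarith
    have b : (k : ℝ) < 1 := by linarith
    have a' : 0 < k := by exact_mod_cast a
    have b' : k < 1 := by exact_mod_cast b
    omega
  have key := cot_series_rep' hz
  have key2 : Real.pi * Real.cot (Real.pi * (y / 2)) - 1 / (y / 2) =
      ∑' n : ℕ, (1 / (y / 2 - (n + 1)) + 1 / (y / 2 + (n + 1))) := by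
    exact_mod_cast key
  have e : y * (Real.pi * Real.cot (Real.pi * y / 2)) - 2 =
      y * (Real.pi * Real.cot (Real.pi * (y / 2)) - 1 / (y / 2)) := by
    rw [mul_div_assoc]
    field_simp
  rw [e, key2, Tser, ← tsum_mul_left, ← tsum_mul_left]
  congr 1
  ext n
  have hn : (0 : ℝ) ≤ n := n.cast_nonneg
  have h2 : y / 2 - ((n : ℝ) + 1) ≠ 0 := by linarith
  have h3 : y / 2 + ((n : ℝ) + 1) ≠ 0 := by linarith
  have h4 : qn n - y ^ 2 ≠ 0 := by
    have := qn_ge n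
    nlinarith
  rw [div_add_div _ _ h2 h3, mul_div_assoc', mul_div_assoc', div_eq_div_iff (mul_ne_zero h2 h3) h4]
  unfold qn
  ring

lemma cot_quarter : Real.cot (Real.pi / 4) = 1 := by
  rw [← Real.tan_inv_eq_cot, Real.tan_pi_div_four, inv_one]

lemma T_quarter : Tser (1 / 4) = 1 / 2 - Real.pi / 8 := by
  have h := cot_T (y := 1 / 2) (by norm_num) (by norm_num)
  rw [show Real.pi * (1 / 2) / 2 = Real.pi / 4 by ring, cot_quarter] at h
  norm_num at h ⊢
  linarith

lemma cot_S {y : ℝ} (h0 : 0 < y) (h1 : y ≤ 1) :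
    1 - 2 * (y * Real.cot (Real.pi * y / 2)) = 2 / Real.pi * ((4 * y ^ 2 - 1) * Sser (y ^ 2)) := by
  have h := cot_T h0 h1
  have h2 := T_sub (u := y ^ 2) (by positivity) (by nlinarith)
  rw [T_quarter] at h2
  have := Real.pi_pos
  generalize Real.cot (Real.pi * y / 2) = c at h ⊢
  field_simp
  linarith

lemma w_S {ν : ℝ} (h0 : 0 ≤ ν) (h1 : ν ≤ 1) :
    1 - 2 * w ν = 2 / Real.pi * ((3 - 4 * ν ^ 2) * Sser (1 - ν ^ 2)) := by
  unfold w
  split_ifs with h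
  · subst h
    have h2 := T_sub (u := 0) le_rfl zero_le_one
    rw [T_quarter] at h2
    have h3 : Tser 0 = 0 := by simp [Tser]
    rw [h3] at h2
    have := Real.pi_pos
    norm_num
    field_simp
    linarith
  · have hlt : ν < 1 := lt_of_le_of_ne h1 h
    have hp : 0 < 1 - ν ^ 2 := by nlinarith
    have hs : Ups ν ^ 2 = 1 - ν ^ 2 := Real.sq_sqrt hp.le
    have := cot_S (y := Ups ν) (Real.sqrt_pos.2 hp)
      (Real.sqrt_le_one.2 (by nlinarith))
    rw [this, hs]
    ring

lemma complex_S (n : ℕ) {z : ℂ} (hz : z ∈ Metric.ball (0 : ℂ) 2) :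
    (qn n - 2 : ℝ) ≤ ‖(qn n : ℂ) - z‖ := by
  have h := norm_sub_norm_le (qn n : ℂ) z
  have := qn_ge n
  rw [Complex.norm_real, Real.norm_of_nonneg (by linarith)] at h
  have : ‖z‖ < 2 := by simpa using hz
  linarith

lemma Sser_analytic {u : ℝ} (h : |u| < 2) : AnalyticAt ℝ Sser u := by
  have hd : DifferentiableOn ℂ
      (fun z : ℂ => ∑' n : ℕ, (qn n : ℂ) / (((qn n : ℂ) - 1 / 4) * ((qn n : ℂ) - z)))
      (Metric.ball 0 2) := by
    refine Complex.differentiableOn_tsum_of_summable_norm summable_base ?_ Metric.isOpen_ball ?_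
    · intro n z hz
      have h1 := complex_S n hz
      have h2 := qn_ge n
      have h3 : (qn n : ℂ) - z ≠ 0 := by
        intro h0
        rw [h0, norm_zero] at h1
        linarith
      have h4 : (qn n : ℂ) - 1 / 4 ≠ 0 := by
        have h5 : ((qn n - 1 / 4 : ℝ) : ℂ) ≠ 0 := Complex.ofReal_ne_zero.2 (by linarith)
        push_cast at h5
        exact h5
      apply DifferentiableAt.differentiableWithinAt
      exact (differentiableAt_const _).div
        ((differentiableAt_const _).mul ((differentiableAt_const _).sub differentiableAt_id))
        (mul_ne_zero h4 h3)
    · intro n z hz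
      have h1 := complex_S n hz
      have h2 := qn_ge n
      have e : ‖(qn n : ℂ) - 1 / 4‖ = qn n - 1 / 4 := by
        have : (qn n : ℂ) - 1 / 4 = ((qn n - 1 / 4 : ℝ) : ℂ) := by push_cast; rfl
        rw [this, Complex.norm_real, Real.norm_of_nonneg (by linarith)]
      rw [norm_div, norm_mul, e, Complex.norm_real, Real.norm_of_nonneg (by linarith),
        div_le_div_iff₀ (mul_pos (by linarith) (by linarith)) (by linarith)]
      have h5 : (qn n - 1 / 4) * (qn n - 2) ≤ (qn n - 1 / 4) * ‖(qn n : ℂ) - z‖ :=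
        mul_le_mul_of_nonneg_left h1 (by linarith)
      nlinarith
  have ha := (hd.analyticAt (Metric.isOpen_ball.mem_nhds
    (show (u : ℂ) ∈ Metric.ball (0 : ℂ) 2 by simpa using h))).re_ofReal
  convert ha using 1
  ext v
  rw [← Complex.ofReal_re (Sser v)]
  congr 1
  unfold Sser
  push_cast
  rfl

lemma S_quarter : Sser (1 / 4) = Real.pi * (Real.pi - 2) / 8 := by
  have hS : DifferentiableAt ℝ Sser ((1 / 2 : ℝ) ^ 2) :=
    (Sser_analytic (by norm_num [abs_of_pos])).differentiableAt
  have hp : HasDerivAt (fun y : ℝ => y ^ 2) (2 * (1 / 2 : ℝ)) (1 / 2) := by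
    simpa using hasDerivAt_pow 2 (1 / 2 : ℝ)
  have hc : HasDerivAt (fun y : ℝ => Sser (y ^ 2)) (deriv Sser ((1 / 2 : ℝ) ^ 2) * (2 * (1 / 2 : ℝ)))
    (1 / 2) := HasDerivAt.comp (h := fun y : ℝ => y ^ 2) (1 / 2 : ℝ) hS.hasDerivAt hp
  have hR := (((hp.const_mul 4).sub_const 1).mul hc).const_mul (2 / Real.pi)
  have hlin : HasDerivAt (fun y : ℝ => Real.pi * y / 2) (Real.pi / 2) (1 / 2) := by
    simpa using ((hasDerivAt_id (1 / 2 : ℝ)).const_mul Real.pi).div_const 2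
  have hq : Real.pi * (1 / 2) / 2 = Real.pi / 4 := by ring
  have hsin : Real.sin (Real.pi * (1 / 2) / 2) ≠ 0 := by
    rw [hq, Real.sin_pi_div_four]; positivity
  have hcot := (hlin.cos).div (hlin.sin) hsin
  have hL := (((hasDerivAt_id (1 / 2 : ℝ)).mul hcot).const_mul 2).const_sub 1
  have heq : (fun y : ℝ => 2 / Real.pi * ((4 * y ^ 2 - 1) * Sser (y ^ 2))) =ᶠ[nhds (1 / 2)]
      (fun y : ℝ => 1 - 2 * (y * (Real.cos (Real.pi * y / 2) / Real.sin (Real.pi * y / 2)))) := by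
    filter_upwards [Ioo_mem_nhds (show (0 : ℝ) < 1 / 2 by norm_num)
      (show (1 / 2 : ℝ) < 1 by norm_num)] with y hy
    rw [← cot_S hy.1 hy.2.le, Real.cot_eq_cos_div_sin]
  have hu := (hL.congr_of_eventuallyEq heq).unique hR
  simp only [hq, Real.sin_pi_div_four, Real.cos_pi_div_four, id] at hu
  have h2 : √(2 : ℝ) ^ 2 = 2 := Real.sq_sqrt (by norm_num)
  have hs2 : √(2 : ℝ) ≠ 0 := by positivity
  have := Real.pi_pos
  norm_num at hu ⊢
  field_simp at hu
  rw [show Real.pi / 2 ^ 2 = Real.pi / 4 by norm_num, Real.sin_pi_div_four,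
    Real.cos_pi_div_four] at hu
  apply mul_left_cancel₀ hs2
  linarith

lemma eta_eq {ν : ℝ} (h0 : 0 ≤ ν) (h1 : ν ≤ 1) :
    eta ν = ((Real.sqrt (9 + 4 * ν ^ 2) + 4 * ν) * (2 / Real.pi * Sser (1 - ν ^ 2)))⁻¹ := by
  have hpi := Real.pi_pos
  have hs : Real.sqrt (9 + 4 * ν ^ 2) ^ 2 = 9 + 4 * ν ^ 2 := Real.sq_sqrt (by positivity)
  have hsp : 0 < Real.sqrt (9 + 4 * ν ^ 2) := Real.sqrt_pos.2 (by positivity)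
  have hS := Sser_pos (u := 1 - ν ^ 2) (by nlinarith)
  have h3 : Real.sqrt 3 ^ 2 = 3 := Real.sq_sqrt (by norm_num)
  have h3p : 0 < Real.sqrt 3 := by positivity
  unfold eta
  split_ifs with h
  · have hν : ν ^ 2 = 3 / 4 := by rw [h, div_pow, h3]; norm_num
    have h4 : Real.sqrt (9 + 4 * ν ^ 2) = 2 * Real.sqrt 3 := by
      rw [hν, Real.sqrt_eq_iff_mul_self_eq (by norm_num) (by positivity)]
      nlinarith
    rw [h4, hν, show (1 : ℝ) - 3 / 4 = 1 / 4 by norm_num, S_quarter, h]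
    have : Real.pi - 2 ≠ 0 := by linarith [Real.pi_gt_three]
    field_simp
    norm_num
  · have hne : 3 - 4 * ν ^ 2 ≠ 0 := by
      intro hc
      apply h
      have : (ν - Real.sqrt 3 / 2) * (ν + Real.sqrt 3 / 2) = 0 := by nlinarith
      rcases mul_eq_zero.1 this with h' | h'
      · linarith
      · linarith
    rw [w_S h0 h1, ← one_div, div_eq_div_iff (by positivity) (by positivity)]
    field_simp
    nlinarith

lemma mono_term {a x y s t : ℝ} (ha : 3 ≤ a) (hx : 0 ≤ x) (hxy : x ≤ y) (hy : y ≤ 1)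
    (hs' : s * (x + y) ≤ 8) (hst : s ≤ t) :
    (s + 4 * x) / (a + x ^ 2) ≤ (t + 4 * y) / (a + y ^ 2) := by
  rw [div_le_div_iff₀ (by positivity) (by positivity)]
  have hxy1 : x * y ≤ 1 := by nlinarith
  have h1 : (y - x) * (s * (x + y)) ≤ (y - x) * (4 * (a - x * y)) :=
    mul_le_mul_of_nonneg_left (by linarith) (by linarith)
  have h2 : s * (a + x ^ 2) ≤ t * (a + x ^ 2) := mul_le_mul_of_nonneg_right hst (by positivity)
  nlinarith

lemma den_mono {x y : ℝ} (hx : 0 ≤ x) (hxy : x ≤ y) (hy : y ≤ 1) :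
    (Real.sqrt (9 + 4 * x ^ 2) + 4 * x) * Sser (1 - x ^ 2) ≤
    (Real.sqrt (9 + 4 * y ^ 2) + 4 * y) * Sser (1 - y ^ 2) := by
  have hy0 : 0 ≤ y := hx.trans hxy
  unfold Sser
  rw [← tsum_mul_left, ← tsum_mul_left]
  refine Summable.tsum_le_tsum (fun n => ?_) ((summable_S (by nlinarith)).mul_left _)
    ((summable_S (by nlinarith)).mul_left _)
  have hq := qn_ge n
  have hle : Real.sqrt (9 + 4 * x ^ 2) ≤ 4 := by
    rw [Real.sqrt_le_left (by norm_num)]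
    nlinarith
  have m := mono_term (a := qn n - 1) (by linarith) hx hxy hy
    (by nlinarith [Real.sqrt_nonneg (9 + 4 * x ^ 2)])
    (Real.sqrt_le_sqrt (show 9 + 4 * x ^ 2 ≤ 9 + 4 * y ^ 2 by nlinarith))
  have hc : 0 ≤ qn n / (qn n - 1 / 4) := div_nonneg (by linarith) (by linarith)
  have m2 := mul_le_mul_of_nonneg_left m hc
  have e : ∀ p v : ℝ, p * (qn n / ((qn n - 1 / 4) * (qn n - (1 - v ^ 2)))) =
      qn n / (qn n - 1 / 4) * (p / (qn n - 1 + v ^ 2)) := by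
    intro p v
    rw [show qn n - (1 - v ^ 2) = qn n - 1 + v ^ 2 by ring, ← div_div]
    ring
  rw [e, e]
  exact m2

/-- The map ν ↦ η_ν is real-analytic on [0,1] and monotonically decreasing there;
in particular η_0 = 1 and η_1 = π(4 − √13)/(3(4 − π)). -/
theorem eta_analytic_antitone :
    AnalyticOn ℝ eta (Set.Icc 0 1) ∧ AntitoneOn eta (Set.Icc 0 1) ∧
    eta 0 = 1 ∧ eta 1 = Real.pi * (4 - Real.sqrt 13) / (3 * (4 - Real.pi)) := by
  refine ⟨?_, ?_, ?_, ?_⟩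
  · have hA : AnalyticOn ℝ (fun ν : ℝ =>
        ((Real.sqrt (9 + 4 * ν ^ 2) + 4 * ν) * (2 / Real.pi * Sser (1 - ν ^ 2)))⁻¹)
        (Set.Icc 0 1) := by
      intro ν hν
      apply AnalyticAt.analyticWithinAt
      have hsq : AnalyticAt ℝ (fun ν : ℝ => Real.sqrt (9 + 4 * ν ^ 2)) ν := by
        have h1 : AnalyticAt ℝ Real.sqrt (9 + 4 * ν ^ 2) :=
          (Real.contDiffAt_sqrt (n := ⊤) (by positivity)).analyticAt
        exact AnalyticAt.fun_comp (f := fun ν : ℝ => 9 + 4 * ν ^ 2) h1 (by fun_prop)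
      have hSa : AnalyticAt ℝ (fun ν : ℝ => Sser (1 - ν ^ 2)) ν := by
        have h1 : AnalyticAt ℝ Sser (1 - ν ^ 2) := Sser_analytic (by
          rw [abs_lt]
          constructor <;> nlinarith [hν.1, hν.2])
        exact AnalyticAt.fun_comp (f := fun ν : ℝ => 1 - ν ^ 2) h1 (by fun_prop)
      have hS := Sser_pos (u := 1 - ν ^ 2) (by nlinarith)
      have hν0 := hν.1
      have hsp : 0 < Real.sqrt (9 + 4 * ν ^ 2) := Real.sqrt_pos.2 (by positivity)
      have hpi := Real.pi_pos
      refine AnalyticAt.fun_inv ?_ (by positivity)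
      exact (hsq.fun_add (by fun_prop)).fun_mul (analyticAt_const.fun_mul hSa)
    exact hA.congr fun ν hν => eta_eq hν.1 hν.2
  · intro x hx y hy hxy
    rw [eta_eq hx.1 hx.2, eta_eq hy.1 hy.2]
    have hpi := Real.pi_pos
    have hS := Sser_pos (u := 1 - x ^ 2) (by nlinarith)
    have hx0 := hx.1
    have hsp : 0 < Real.sqrt (9 + 4 * x ^ 2) := Real.sqrt_pos.2 (by positivity)
    apply inv_anti₀ (by positivity)
    have := mul_le_mul_of_nonneg_left (den_mono hx.1 hxy hy.2)
      (show 0 ≤ 2 / Real.pi by positivity)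
    nlinarith
  · have h3 : (0 : ℝ) ≠ Real.sqrt 3 / 2 := by positivity
    have h9 : Real.sqrt 9 = 3 := by
      rw [show (9 : ℝ) = 3 ^ 2 by norm_num, Real.sqrt_sq (by norm_num)]
    simp [eta, w, Ups, h3, h9, Real.cot_eq_cos_div_sin]
  · have h3 : (1 : ℝ) ≠ Real.sqrt 3 / 2 := by
      intro h
      have : Real.sqrt 3 ^ 2 = 3 := Real.sq_sqrt (by norm_num)
      nlinarith
    have h4 : Real.pi - 4 ≠ 0 := by linarith [Real.pi_lt_four]
    have h5 : 4 - Real.pi ≠ 0 := by linarith [Real.pi_lt_four]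
    have h6 : 1 - 2 * (2 / Real.pi) = (Real.pi - 4) / Real.pi := by
      field_simp
      ring
    have hpi := Real.pi_ne_zero
    rw [eta, if_neg h3, w, if_pos rfl, h6, show (9 + 4 * 1 ^ 2 : ℝ) = 13 by norm_num]
    rw [div_eq_div_iff (mul_ne_zero three_ne_zero (div_ne_zero h4 hpi)) (mul_ne_zero three_ne_zero h5)]
    field_simp
    ring
end

section
/- For every τ ∈ [0, ∞) and every ν ∈ [0,1] one has p(τ, ν) ≥ 0. -/
/-- p(τ,ν) := (1−η_ν²)(1+4τ²)(9+4τ²) + 4ν²(5+4τ²)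
  + 4η_ν²(9+4τ²)(sech(πτ)+2τ tanh(πτ)) w_ν − 4η_ν²(9+4τ²) w_ν²
  − 8ν √(4ν² + (1+τ²)(1+4τ²)(9+4τ²)). -/
noncomputable def pfun (τ ν : ℝ) : ℝ :=
  (1 - eta ν ^ 2) * (1 + 4 * τ ^ 2) * (9 + 4 * τ ^ 2) + 4 * ν ^ 2 * (5 + 4 * τ ^ 2)
    + 4 * eta ν ^ 2 * (9 + 4 * τ ^ 2)
        * (1 / Real.cosh (Real.pi * τ) + 2 * τ * Real.tanh (Real.pi * τ)) * w ν
    - 4 * eta ν ^ 2 * (9 + 4 * τ ^ 2) * (w ν) ^ 2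
    - 8 * ν * Real.sqrt (4 * ν ^ 2 + (1 + τ ^ 2) * (1 + 4 * τ ^ 2) * (9 + 4 * τ ^ 2))


lemma q_bounds : (0.285398 : ℝ) < (Real.pi - 2) / 4 ∧ (Real.pi - 2) / 4 < 0.28539825 := by
  constructor
  · linarith [Real.pi_gt_d6]
  · linarith [Real.pi_lt_d6]

/-- The polynomial denominator used in the arctangent comparison. -/
noncomputable def Pol (q s : ℝ) : ℝ :=
  1 - 4 * (s ^ 2 - 1 / 4) * (q + (1 / 2 - q - 2 * q ^ 2) * (s ^ 2 - 1 / 4))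

lemma Pol_pos {q s : ℝ} (h1 : 0.285398 < q) (h2 : q < 0.28539825) (hs0 : 0 ≤ s) (hs1 : s ≤ 1) :
    0 < Pol q s := by
  unfold Pol
  have hy : s ^ 2 ≤ 1 := by nlinarith
  have hy0 : 0 ≤ s ^ 2 := sq_nonneg s
  have hg : 1 / 2 - q - 2 * q ^ 2 < 0.0518 := by nlinarith
  have hg' : 0 < 1 / 2 - q - 2 * q ^ 2 := by nlinarith
  generalize 1 / 2 - q - 2 * q ^ 2 = g1 at *
  generalize s ^ 2 = y at *
  have e1 : (y - 1 / 4) ^ 2 ≤ 9 / 16 := by nlinarith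
  nlinarith [mul_nonneg hg'.le (sub_nonneg.2 e1), mul_nonneg (sub_nonneg.2 hy) (by linarith : 0 ≤ q)]

/-- arctangent comparison function -/
noncomputable def psi (q s : ℝ) : ℝ := (1 + 2 * q) * s - Real.arctan (2 * s / Pol q s)

/-- sign-determining factor of the derivative of `psi` -/
noncomputable def quad (q d : ℝ) : ℝ :=
  (1 + 2 * q) * (16 * q ^ 2 - 8 * (1 / 2 - q - 2 * q ^ 2)) - 24 * (1 / 2 - q - 2 * q ^ 2)
    + 32 * (1 + 2 * q) * q * (1 / 2 - q - 2 * q ^ 2) * d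
    + 16 * (1 + 2 * q) * (1 / 2 - q - 2 * q ^ 2) ^ 2 * d ^ 2

lemma psi_deriv {q s : ℝ} (hP : 0 < Pol q s) :
    HasDerivAt (psi q) ((s ^ 2 - 1 / 4) ^ 2 * quad q (s ^ 2 - 1 / 4) / (Pol q s ^ 2 + 4 * s ^ 2)) s := by
  have hd : HasDerivAt (fun x : ℝ => x ^ 2 - 1 / 4) (2 * s) s := by
    simpa using (hasDerivAt_pow 2 s).sub_const (1 / 4 : ℝ)
  have hPd : HasDerivAt (Pol q)
      (-8 * s * (q + 2 * (1 / 2 - q - 2 * q ^ 2) * (s ^ 2 - 1 / 4))) s := by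
    have h := ((hd.const_mul 4).mul ((hd.const_mul (1 / 2 - q - 2 * q ^ 2)).const_add q)).const_sub 1
    refine (h.congr_deriv ?_)
    ring
  have hf : HasDerivAt (fun x : ℝ => 2 * x / Pol q x) _ s :=
    ((hasDerivAt_id' s).const_mul 2).div hPd hP.ne'
  have h := ((hasDerivAt_id' s).const_mul (1 + 2 * q)).sub hf.arctan
  refine h.congr_deriv ?_
  have hne : Pol q s ^ 2 + 4 * s ^ 2 ≠ 0 := by positivity
  have hne2 : 1 + (2 * s / Pol q s) ^ 2 = (Pol q s ^ 2 + 4 * s ^ 2) / Pol q s ^ 2 := by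
    field_simp; ring
  rw [hne2, eq_div_iff hne]
  field_simp
  unfold quad Pol
  ring

lemma psi_half (q : ℝ) (hq : 1 + 2 * q = Real.pi / 2) : psi q (1 / 2) = 0 := by
  have : Pol q (1 / 2) = 1 := by unfold Pol; norm_num
  unfold psi
  rw [this, hq]
  norm_num [Real.arctan_one]
  ring

lemma psi_zero (q : ℝ) : psi q 0 = 0 := by simp [psi]

lemma quad_mono {q d d' : ℝ} (h1 : 0.285398 < q) (h2 : q < 0.28539825) (hd : -(1 / 4) ≤ d)
    (hdd : d ≤ d') : quad q d ≤ quad q d' := by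
  unfold quad
  have hg : 1 / 2 - q - 2 * q ^ 2 < 0.0518 := by nlinarith
  have hg' : 0 < 1 / 2 - q - 2 * q ^ 2 := by nlinarith
  generalize 1 / 2 - q - 2 * q ^ 2 = g1 at *
  have : 0 ≤ 16 * (1 + 2 * q) * g1 * (d' - d) * (2 * q + g1 * (d + d')) := by
    have : 0 ≤ 2 * q + g1 * (d + d') := by nlinarith
    have := sub_nonneg.2 hdd
    have : 0 ≤ 1 + 2 * q := by linarith
    positivity
  nlinarith

lemma quad_zero_pos {q : ℝ} (h1 : 0.285398 < q) (h2 : q < 0.28539825) : 0 ≤ quad q 0 := by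
  unfold quad
  nlinarith [mul_pos (sub_pos.2 h1) (sub_pos.2 h1)]

lemma psi_mono {q a b : ℝ} (h1 : 0.285398 < q) (h2 : q < 0.28539825) (ha : 0 ≤ a) (hab : a ≤ b)
    (hb : b ≤ 1) (hq : 0 ≤ quad q (a ^ 2 - 1 / 4)) : psi q a ≤ psi q b := by
  have hd : ∀ x ∈ Set.Icc a b, HasDerivAt (psi q) _ x := fun x hx =>
    psi_deriv (Pol_pos h1 h2 (ha.trans hx.1) (hx.2.trans hb))
  refine monotoneOn_of_deriv_nonneg (convex_Icc a b)
    (fun x hx => (hd x hx).continuousAt.continuousWithinAt)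
    (fun x hx => (hd x (interior_subset hx)).differentiableAt.differentiableWithinAt) ?_
    (Set.left_mem_Icc.2 hab) (Set.right_mem_Icc.2 hab) hab
  intro x hx
  have hx' := interior_subset hx
  rw [(hd x hx').deriv]
  have : a ^ 2 ≤ x ^ 2 := pow_le_pow_left₀ ha hx'.1 2
  have := hq.trans (quad_mono h1 h2 (by nlinarith) (sub_le_sub_right this (1 / 4)))
  positivity

lemma psi_anti {q b : ℝ} (h1 : 0.285398 < q) (h2 : q < 0.28539825) (hb0 : 0 ≤ b)
    (hb : b ≤ 1) (hq : quad q (b ^ 2 - 1 / 4) ≤ 0) : psi q b ≤ psi q 0 := by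
  have hd : ∀ x ∈ Set.Icc 0 b, HasDerivAt (psi q) _ x := fun x hx =>
    psi_deriv (Pol_pos h1 h2 hx.1 (hx.2.trans hb))
  refine antitoneOn_of_deriv_nonpos (convex_Icc 0 b)
    (fun x hx => (hd x hx).continuousAt.continuousWithinAt)
    (fun x hx => (hd x (interior_subset hx)).differentiableAt.differentiableWithinAt) ?_
    (Set.left_mem_Icc.2 hb0) (Set.right_mem_Icc.2 hb0) hb0
  intro x hx
  have hx' := interior_subset hx
  rw [(hd x hx').deriv]
  have : x ^ 2 ≤ b ^ 2 := pow_le_pow_left₀ hx'.1 hx'.2 2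
  have h3 := (quad_mono h1 h2 (by nlinarith) (sub_le_sub_right this (1 / 4))).trans hq
  apply div_nonpos_of_nonpos_of_nonneg
  · exact mul_nonpos_of_nonneg_of_nonpos (sq_nonneg _) h3
  · positivity

lemma tangent_ge {s : ℝ} (hs0 : 1 / 2 ≤ s) (hs1 : s < 1) :
    2 * s / Pol ((Real.pi - 2) / 4) s ≤ Real.tan (Real.pi * s / 2) := by
  obtain ⟨h1, h2⟩ := q_bounds
  have hq : 1 + 2 * ((Real.pi - 2) / 4) = Real.pi / 2 := by ring
  set q := (Real.pi - 2) / 4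
  have h := psi_mono h1 h2 (a := 1 / 2) (by norm_num) hs0 hs1.le
    (by norm_num; exact quad_zero_pos h1 h2)
  rw [psi_half q hq] at h
  unfold psi at h
  rw [hq] at h
  have hlt : Real.pi * s / 2 < Real.pi / 2 := by nlinarith [Real.pi_pos]
  have hgt : -(Real.pi / 2) < Real.pi * s / 2 := by nlinarith [Real.pi_pos]
  rw [← Real.arctan_le_arctan_iff, Real.arctan_tan hgt hlt]
  linarith

lemma tangent_le {s : ℝ} (hs0 : 0 ≤ s) (hs1 : s ≤ 1 / 2) :
    Real.tan (Real.pi * s / 2) ≤ 2 * s / Pol ((Real.pi - 2) / 4) s := by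
  obtain ⟨h1, h2⟩ := q_bounds
  have hq : 1 + 2 * ((Real.pi - 2) / 4) = Real.pi / 2 := by ring
  set q := (Real.pi - 2) / 4
  have h : psi q s ≤ 0 := by
    rcases le_total (quad q (s ^ 2 - 1 / 4)) 0 with hc | hc
    · have := psi_anti h1 h2 hs0 (by linarith) hc
      rwa [psi_zero] at this
    · have := psi_mono h1 h2 hs0 hs1 (by norm_num) hc
      rwa [psi_half q hq] at this
  unfold psi at h
  rw [hq] at h
  have hlt : Real.pi * s / 2 < Real.pi / 2 := by nlinarith [Real.pi_pos]
  have hgt : -(Real.pi / 2) < Real.pi * s / 2 := by nlinarith [Real.pi_pos]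
  rw [← Real.arctan_le_arctan_iff, Real.arctan_tan hgt hlt]
  linarith

/-- tangent-line minorant of the auxiliary function `g` -/
noncomputable def gl (ν : ℝ) : ℝ :=
  (Real.pi - 2) / 4 + (1 / 2 - (Real.pi - 2) / 4 - 2 * ((Real.pi - 2) / 4) ^ 2) * (3 / 4 - ν ^ 2)

lemma w_of_lt {ν : ℝ} (h0 : 0 < ν) (h1 : ν < 1) :
    ∃ s, 0 < s ∧ s < 1 ∧ s ^ 2 = 1 - ν ^ 2 ∧ w ν = s / Real.tan (Real.pi * s / 2) ∧
      0 < Real.tan (Real.pi * s / 2) := by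
  have hy : 0 < 1 - ν ^ 2 := by nlinarith
  have hs : 0 < Ups ν := Real.sqrt_pos.2 hy
  have hs2 : Ups ν ^ 2 = 1 - ν ^ 2 := Real.sq_sqrt hy.le
  have hs1 : Ups ν < 1 := by nlinarith
  refine ⟨Ups ν, hs, hs1, hs2, ?_, ?_⟩
  · unfold w
    rw [if_neg h1.ne, Real.cot_eq_cos_div_sin, Real.tan_eq_sin_div_cos, div_div_eq_mul_div,
      mul_div_assoc']
  · apply Real.tan_pos_of_pos_of_lt_pi_div_two
    · have := Real.pi_pos
      positivity
    · nlinarith [Real.pi_pos]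

lemma w_zero : w 0 = 0 := by
  unfold w Ups
  norm_num [Real.cot_eq_cos_div_sin]

lemma w_one : w 1 = 2 / Real.pi := by simp [w]

lemma w_nonneg {ν : ℝ} (h0 : 0 ≤ ν) (h1 : ν ≤ 1) : 0 ≤ w ν := by
  rcases h0.eq_or_lt with rfl | h0
  · rw [w_zero]
  rcases h1.eq_or_lt with rfl | h1
  · rw [w_one]; have := Real.pi_pos; positivity
  obtain ⟨s, hs, -, -, hw, ht⟩ := w_of_lt h0 h1
  rw [hw]; positivity

lemma w_le {ν : ℝ} (h0 : 0 ≤ ν) (h1 : ν ≤ 1) : w ν ≤ 0.637 := by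
  have hpi : 2 / Real.pi ≤ 0.637 := by
    rw [div_le_iff₀ Real.pi_pos]; linarith [Real.pi_gt_d6]
  refine le_trans ?_ hpi
  rcases h0.eq_or_lt with rfl | h0
  · rw [w_zero]; have := Real.pi_pos; positivity
  rcases h1.eq_or_lt with rfl | h1
  · rw [w_one]
  obtain ⟨s, hs, hs1, -, hw, ht⟩ := w_of_lt h0 h1
  rw [hw, div_le_div_iff₀ ht Real.pi_pos]
  have := Real.le_tan (x := Real.pi * s / 2) (by have := Real.pi_pos; positivity)
    (by nlinarith [Real.pi_pos])
  linarith

lemma w_le_sq {ν : ℝ} (h0 : 0 ≤ ν) (h1 : ν ≤ 1 / 2) : w ν ≤ ν ^ 2 := by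
  rcases h0.eq_or_lt with rfl | h0
  · rw [w_zero]; norm_num
  obtain ⟨s, hs, hs1, hs2, hw, ht⟩ := w_of_lt h0 (by linarith)
  have hs3 : 0.86 < s := by nlinarith
  have hpi := Real.pi_gt_d6
  have hpi2 := Real.pi_lt_d6
  have e : Real.pi * s / 2 = Real.pi / 2 - Real.pi * (1 - s) / 2 := by ring
  have hc : Real.cos (Real.pi * s / 2) ≤ Real.pi * (1 - s) / 2 := by
    rw [e, Real.cos_pi_div_two_sub]
    apply Real.sin_le
    have := sub_nonneg.2 hs1.le
    positivity
  have hsn : 0.9 ≤ Real.sin (Real.pi * s / 2) := by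
    rw [e, Real.sin_pi_div_two_sub]
    have := Real.one_sub_sq_div_two_le_cos (x := Real.pi * (1 - s) / 2)
    have h3 : Real.pi * (1 - s) / 2 ≤ 0.3 := by nlinarith
    have h4 : 0 ≤ Real.pi * (1 - s) / 2 := by nlinarith
    nlinarith
  rw [hw, Real.tan_eq_sin_div_cos, div_div_eq_mul_div, div_le_iff₀ (by linarith)]
  have h2 : ν ^ 2 = (1 - s) * (1 + s) := by nlinarith
  rw [h2]
  have h5 : 0 ≤ (1 - s) * (1 + s) := by nlinarith
  have h6 : s * Real.cos (Real.pi * s / 2) ≤ s * (Real.pi * (1 - s) / 2) :=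
    mul_le_mul_of_nonneg_left hc hs.le
  have h7 : (1 - s) * (1 + s) * 0.9 ≤ (1 - s) * (1 + s) * Real.sin (Real.pi * s / 2) :=
    mul_le_mul_of_nonneg_left hsn h5
  have h8 : s * (Real.pi * (1 - s) / 2) ≤ (1 - s) * (1 + s) * 0.9 := by
    have : 0 ≤ (1 - s) * ((1 + s) * 0.9 - s * Real.pi / 2) := by
      apply mul_nonneg (by linarith)
      nlinarith
    linarith
  linarith

lemma w_tangent_lo {ν : ℝ} (h0 : 0 ≤ ν) (h1 : ν ^ 2 ≤ 3 / 4) :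
    (3 - 4 * ν ^ 2) * gl ν ≤ 1 - 2 * w ν := by
  obtain ⟨hq1, hq2⟩ := q_bounds
  rcases h0.eq_or_lt with rfl | h0
  · rw [w_zero]; unfold gl; nlinarith
  obtain ⟨s, hs, hs1, hs2, hw, ht⟩ := w_of_lt h0 (by nlinarith)
  have h := tangent_ge (s := s) (by nlinarith) hs1
  have hP := Pol_pos hq1 hq2 hs.le hs1.le
  rw [div_le_iff₀ hP] at h
  have : w ν ≤ Pol ((Real.pi - 2) / 4) s / 2 := by
    rw [hw, div_le_div_iff₀ ht (by norm_num)]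
    linarith
  unfold Pol at this
  unfold gl
  rw [hs2] at this
  nlinarith

lemma w_tangent_hi {ν : ℝ} (h0 : 0 ≤ ν) (hν1 : ν ≤ 1) (h1 : 3 / 4 ≤ ν ^ 2) :
    1 - 2 * w ν ≤ (3 - 4 * ν ^ 2) * gl ν := by
  obtain ⟨hq1, hq2⟩ := q_bounds
  rcases hν1.eq_or_lt with rfl | hν1
  · rw [w_one]; unfold gl
    have : 0.63661 ≤ 2 / Real.pi := by
      rw [le_div_iff₀ Real.pi_pos]; linarith [Real.pi_lt_d6]
    nlinarith
  obtain ⟨s, hs, hs1, hs2, hw, ht⟩ := w_of_lt (by nlinarith) hν1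
  have h := tangent_le (s := s) hs.le (by nlinarith)
  have hP := Pol_pos hq1 hq2 hs.le hs1.le
  rw [le_div_iff₀ hP] at h
  have : Pol ((Real.pi - 2) / 4) s / 2 ≤ w ν := by
    rw [hw, div_le_div_iff₀ (by norm_num) ht]
    linarith
  unfold Pol at this
  unfold gl
  rw [hs2] at this
  nlinarith

lemma gl_pos {ν : ℝ} (h0 : 0 ≤ ν) (hν1 : ν ≤ 1) : 0.27 < gl ν := by
  obtain ⟨hq1, hq2⟩ := q_bounds
  unfold gl
  have hg : 1 / 2 - (Real.pi - 2) / 4 - 2 * ((Real.pi - 2) / 4) ^ 2 < 0.0518 := by nlinarith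
  have hg' : 0 < 1 / 2 - (Real.pi - 2) / 4 - 2 * ((Real.pi - 2) / 4) ^ 2 := by nlinarith
  have : ν ^ 2 ≤ 1 := by nlinarith
  nlinarith

/-- All facts about `w` and `eta`, in terms of the regularized quantity `g`. -/
lemma eta_facts {ν : ℝ} (h0 : 0 ≤ ν) (hν1 : ν ≤ 1) :
    ∃ g, gl ν ≤ g ∧ 1 - 2 * w ν = (3 - 4 * ν ^ 2) * g ∧
      eta ν = 1 / ((Real.sqrt (9 + 4 * ν ^ 2) + 4 * ν) * g) ∧
      (ν ≤ 1 / 8 → 1 / 3 - ν ^ 2 / 4 ≤ g) := by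
  have hE2 : Real.sqrt (9 + 4 * ν ^ 2) ^ 2 = 9 + 4 * ν ^ 2 := Real.sq_sqrt (by positivity)
  have hE0 : 0 < Real.sqrt (9 + 4 * ν ^ 2) := Real.sqrt_pos.2 (by positivity)
  have h3 : Real.sqrt 3 ^ 2 = 3 := Real.sq_sqrt (by norm_num)
  have h30 : 0 < Real.sqrt 3 := Real.sqrt_pos.2 (by norm_num)
  have hglp := gl_pos h0 hν1
  by_cases hν : ν = Real.sqrt 3 / 2
  · have hν2 : ν ^ 2 = 3 / 4 := by rw [hν, div_pow, h3]; norm_num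
    have hgl : gl ν = (Real.pi - 2) / 4 := by unfold gl; rw [hν2]; ring
    refine ⟨gl ν, le_rfl, ?_, ?_, ?_⟩
    · have a := w_tangent_lo h0 hν2.le
      have b := w_tangent_hi h0 hν1 hν2.ge
      linarith
    · have hE : Real.sqrt (9 + 4 * ν ^ 2) = 2 * Real.sqrt 3 := by
        rw [hν2, Real.sqrt_eq_iff_mul_self_eq_of_pos (by positivity)]
        nlinarith
      unfold eta
      rw [if_pos hν, hE, hgl, hν]
      congr 1
      ring
    · intro h; nlinarith
  · have hne : 3 - 4 * ν ^ 2 ≠ 0 := by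
      intro h
      apply hν
      have : (ν - Real.sqrt 3 / 2) * (ν + Real.sqrt 3 / 2) = 0 := by nlinarith
      rcases mul_eq_zero.1 this with h | h
      · linarith
      · nlinarith
    have hg : gl ν ≤ (1 - 2 * w ν) / (3 - 4 * ν ^ 2) := by
      rcases lt_or_gt_of_ne hne with hlt | hgt
      · rw [le_div_iff_of_neg hlt]
        have := w_tangent_hi h0 hν1 (by linarith)
        linarith
      · rw [le_div_iff₀ hgt]
        have := w_tangent_lo h0 (by linarith)
        linarith
    have hgp : 0 < (1 - 2 * w ν) / (3 - 4 * ν ^ 2) := by linarith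
    have hw : 1 - 2 * w ν ≠ 0 := by
      intro h; rw [h] at hgp; simp at hgp
    refine ⟨(1 - 2 * w ν) / (3 - 4 * ν ^ 2), hg, ?_, ?_, ?_⟩
    · field_simp
    · unfold eta
      rw [if_neg hν]
      have : Real.sqrt (9 + 4 * ν ^ 2) + 4 * ν ≠ 0 := by positivity
      rw [div_eq_div_iff (by simpa using hw) (by positivity)]
      field_simp
      linear_combination hE2
    · intro h
      have h2 : ν ^ 2 ≤ 1 / 64 := by nlinarith
      rw [le_div_iff₀ (by linarith)]
      have := w_le_sq h0 (by linarith)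
      nlinarith [sq_nonneg ν]

lemma sum_coeff_nonneg (i : ℕ) :
    0 ≤ 2 * Real.pi ^ 3 / ((2 * i + 1) * (2 * i + 2) * (2 * i + 3) : ℝ)
      - Real.pi ^ 4 / ((2 * i + 1) * (2 * i + 2) * (2 * i + 3) * (2 * i + 4) : ℝ)
      - (2 * Real.pi - Real.pi ^ 2 / 2) * Real.pi ^ 2 / ((2 * i + 1) * (2 * i + 2) : ℝ)
      + 19 / 50 := by
  have h1 := Real.pi_gt_d6
  have h2 := Real.pi_lt_d6
  have a3 : Real.pi ^ 3 ≤ 31.0063 := by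
    calc Real.pi ^ 3 ≤ 3.141593 ^ 3 := pow_le_pow_left₀ Real.pi_pos.le h2.le 3
      _ ≤ _ := by norm_num
  have b3 : 31.0062 ≤ Real.pi ^ 3 := by
    calc _ ≤ (3.141592 : ℝ) ^ 3 := by norm_num
      _ ≤ _ := pow_le_pow_left₀ (by norm_num) h1.le 3
  have a4 : Real.pi ^ 4 ≤ 97.4092 := by
    calc Real.pi ^ 4 ≤ 3.141593 ^ 4 := pow_le_pow_left₀ Real.pi_pos.le h2.le 4
      _ ≤ _ := by norm_num
  have b4 : 97.4090 ≤ Real.pi ^ 4 := by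
    calc _ ≤ (3.141592 : ℝ) ^ 4 := by norm_num
      _ ≤ _ := pow_le_pow_left₀ (by norm_num) h1.le 4
  have key : 0 ≤ 2 * Real.pi ^ 3 * (2 * i + 4) - Real.pi ^ 4
      - (2 * Real.pi ^ 3 - Real.pi ^ 4 / 2) * ((2 * i + 3) * (2 * i + 4))
      + 19 / 50 * ((2 * i + 1) * (2 * i + 2) * (2 * i + 3) * (2 * i + 4)) := by
    rcases i with _ | j
    · push_cast; linarith
    · push_cast
      have hj : (0 : ℝ) ≤ j := Nat.cast_nonneg j
      have hT : 2 * Real.pi ^ 3 - Real.pi ^ 4 / 2 ≤ 13.309 := by linarith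
      have hA : (2 * Real.pi ^ 3 - Real.pi ^ 4 / 2) * ((2 * (j + 1) + 3) * (2 * (j + 1) + 4))
          ≤ 13.309 * ((2 * (j + 1) + 3) * (2 * (j + 1) + 4) : ℝ) :=
        mul_le_mul_of_nonneg_right hT (by positivity)
      have hB : 31.0062 * (2 * (j + 1) + 4 : ℝ) ≤ Real.pi ^ 3 * (2 * (j + 1) + 4) :=
        mul_le_mul_of_nonneg_right b3 (by positivity)
      nlinarith [pow_nonneg hj 2, pow_nonneg hj 3, pow_nonneg hj 4]
  have e : 2 * Real.pi ^ 3 / ((2 * i + 1) * (2 * i + 2) * (2 * i + 3) : ℝ)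
      - Real.pi ^ 4 / ((2 * i + 1) * (2 * i + 2) * (2 * i + 3) * (2 * i + 4) : ℝ)
      - (2 * Real.pi - Real.pi ^ 2 / 2) * Real.pi ^ 2 / ((2 * i + 1) * (2 * i + 2) : ℝ)
      + 19 / 50 = (2 * Real.pi ^ 3 * (2 * i + 4) - Real.pi ^ 4
      - (2 * Real.pi ^ 3 - Real.pi ^ 4 / 2) * ((2 * i + 3) * (2 * i + 4))
      + 19 / 50 * ((2 * i + 1) * (2 * i + 2) * (2 * i + 3) * (2 * i + 4)))
        / ((2 * i + 1) * (2 * i + 2) * (2 * i + 3) * (2 * i + 4)) := by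
    field_simp
  rw [e]
  positivity

lemma S_ge (τ : ℝ) (hτ : 0 ≤ τ) :
    1 + (2 * Real.pi - Real.pi ^ 2 / 2) * τ ^ 2 - 19 / 50 * (τ ^ 2) ^ 2
      ≤ 1 / Real.cosh (Real.pi * τ) + 2 * τ * Real.tanh (Real.pi * τ) := by
  have hc := Real.hasSum_cosh (Real.pi * τ)
  have hs := (Real.hasSum_sinh (Real.pi * τ)).mul_left (2 * τ)
  have hc1 := ((hasSum_nat_add_iff' 1).2 hc).mul_left ((2 * Real.pi - Real.pi ^ 2 / 2) * τ ^ 2)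
  have hc2 := (hasSum_nat_add_iff' 2).2 hc
  have hs1 := (hasSum_nat_add_iff' 1).2 hs
  have hc0 := hc.mul_left (19 / 50 * (τ ^ 2) ^ 2)
  have H := ((hs1.sub hc2).sub hc1).add hc0
  have hpos : 0 ≤ 1 + 2 * τ * Real.sinh (Real.pi * τ)
      - (1 + (2 * Real.pi - Real.pi ^ 2 / 2) * τ ^ 2 - 19 / 50 * (τ ^ 2) ^ 2)
        * Real.cosh (Real.pi * τ) := by
    have h0 := H.nonneg (fun i => by
      have e : 2 * τ * ((Real.pi * τ) ^ (2 * (i + 1) + 1) / ((2 * (i + 1) + 1).factorial : ℝ))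
          - (Real.pi * τ) ^ (2 * (i + 2)) / ((2 * (i + 2)).factorial : ℝ)
          - (2 * Real.pi - Real.pi ^ 2 / 2) * τ ^ 2 *
            ((Real.pi * τ) ^ (2 * (i + 1)) / ((2 * (i + 1)).factorial : ℝ))
          + 19 / 50 * (τ ^ 2) ^ 2 * ((Real.pi * τ) ^ (2 * i) / ((2 * i).factorial : ℝ))
          = ((Real.pi * τ) ^ (2 * i) / ((2 * i).factorial : ℝ)) * τ ^ 4 *
          (2 * Real.pi ^ 3 / ((2 * i + 1) * (2 * i + 2) * (2 * i + 3) : ℝ)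
      - Real.pi ^ 4 / ((2 * i + 1) * (2 * i + 2) * (2 * i + 3) * (2 * i + 4) : ℝ)
      - (2 * Real.pi - Real.pi ^ 2 / 2) * Real.pi ^ 2 / ((2 * i + 1) * (2 * i + 2) : ℝ)
      + 19 / 50) := by
        have f2 : ((2 * (i + 1)).factorial : ℝ) = (2 * i + 2) * (2 * i + 1) * (2 * i).factorial := by
          rw [show 2 * (i + 1) = (2 * i + 1) + 1 by ring, Nat.factorial_succ, Nat.factorial_succ]
          push_cast; ring
        have f3 : ((2 * (i + 1) + 1).factorial : ℝ)
            = (2 * i + 3) * ((2 * i + 2) * (2 * i + 1) * (2 * i).factorial) := by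
          rw [Nat.factorial_succ, Nat.cast_mul, f2]
          push_cast; ring
        have f4 : ((2 * (i + 2)).factorial : ℝ)
            = (2 * i + 4) * ((2 * i + 3) * ((2 * i + 2) * (2 * i + 1) * (2 * i).factorial)) := by
          rw [show 2 * (i + 2) = (2 * (i + 1) + 1) + 1 by ring, Nat.factorial_succ, Nat.cast_mul, f3]
          push_cast; ring
        have hf : ((2 * i).factorial : ℝ) ≠ 0 := by positivity
        rw [f2, f3, f4, show 2 * (i + 1) + 1 = 2 * i + 3 by ring, show 2 * (i + 2) = 2 * i + 4 by ring,
          show 2 * (i + 1) = 2 * i + 2 by ring, pow_add _ (2 * i) 3, pow_add _ (2 * i) 4,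
          pow_add _ (2 * i) 2]
        generalize (Real.pi * τ) ^ (2 * i) = X
        field_simp
      rw [e]
      have := sum_coeff_nonneg i
      have := Real.pi_pos
      positivity)
    simp [Finset.sum_range_succ] at h0
    nlinarith
  have hcp := Real.cosh_pos (Real.pi * τ)
  rw [Real.tanh_eq_sinh_div_cosh]
  have : 1 / Real.cosh (Real.pi * τ) + 2 * τ * (Real.sinh (Real.pi * τ) / Real.cosh (Real.pi * τ))
      = (1 + 2 * τ * Real.sinh (Real.pi * τ)) / Real.cosh (Real.pi * τ) := by ring
  rw [this, le_div_iff₀ hcp]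
  linarith

lemma S_ge_one (τ : ℝ) (hτ : 1 ≤ τ) :
    1 ≤ 1 / Real.cosh (Real.pi * τ) + 2 * τ * Real.tanh (Real.pi * τ) := by
  have hcp := Real.cosh_pos (Real.pi * τ)
  have hx : 3 ≤ Real.pi * τ := by nlinarith [Real.pi_gt_three]
  have h1 := Real.add_one_le_exp (Real.pi * τ)
  have h2 : Real.exp (-(Real.pi * τ)) ≤ 1 := Real.exp_le_one_iff.2 (by linarith)
  have h3 : 1 / 2 ≤ Real.tanh (Real.pi * τ) := by
    rw [Real.tanh_eq_sinh_div_cosh, le_div_iff₀ hcp, Real.sinh_eq, Real.cosh_eq]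
    linarith
  have : 0 ≤ 1 / Real.cosh (Real.pi * τ) := by positivity
  nlinarith

lemma rem_nonneg {q m : ℝ} (h1 : 0.285398 < q) (h2 : q < 0.28539825) (hm0 : 0.28 ≤ m)
    (hm1 : m ≤ 0.85) :
    0 ≤ (729/256 - 729/64 * q - 729/64 * q ^ 2 + 729/16 * q ^ 3 + 729/16 * q ^ 4)
      + (-26487/1024 + 21303/256 * q + 36855/256 * q ^ 2 - 21303/64 * q ^ 3
          - 26487/64 * q ^ 4) * m
      + (72819/1024 - 45603/256 * q - 118035/256 * q ^ 2 + 45603/64 * q ^ 3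
          + 72819/64 * q ^ 4) * m ^ 2
      + (-39231/512 + 24039/128 * q + 63087/128 * q ^ 2 - 24039/32 * q ^ 3
          - 39231/32 * q ^ 4) * m ^ 3
      + (18441/512 - 12849/128 * q - 28217/128 * q ^ 2 + 12849/32 * q ^ 3
          + 18441/32 * q ^ 4) * m ^ 4
      + (-7659/1024 + 6363/256 * q + 10251/256 * q ^ 2 - 6363/64 * q ^ 3
          - 7659/64 * q ^ 4) * m ^ 5
      + (567/1024 - 567/256 * q - 567/256 * q ^ 2 + 567/64 * q ^ 3 + 567/64 * q ^ 4) * m ^ 6 := by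
  have hm : 0 ≤ m := by linarith
  have q0 : 0 ≤ q := by linarith
  have a2 : q ^ 2 ≤ 0.28539825 ^ 2 := pow_le_pow_left₀ q0 h2.le 2
  have a3 : q ^ 3 ≤ 0.28539825 ^ 3 := pow_le_pow_left₀ q0 h2.le 3
  have a4 : q ^ 4 ≤ 0.28539825 ^ 4 := pow_le_pow_left₀ q0 h2.le 4
  have b2 : 0.285398 ^ 2 ≤ q ^ 2 := pow_le_pow_left₀ (by norm_num) h1.le 2
  have b3 : 0.285398 ^ 3 ≤ q ^ 3 := pow_le_pow_left₀ (by norm_num) h1.le 3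
  have b4 : 0.285398 ^ 4 ≤ q ^ 4 := pow_le_pow_left₀ (by norm_num) h1.le 4
  generalize q ^ 2 = Q2 at *
  generalize q ^ 3 = Q3 at *
  generalize q ^ 4 = Q4 at *
  norm_num at a2 a3 a4 b2 b3 b4
  have c0 : 0.028 ≤ 729/256 - 729/64 * q - 729/64 * Q2 + 729/16 * Q3 + 729/16 * Q4 := by linarith
  have c1 : -0.877 ≤ -26487/1024 + 21303/256 * q + 36855/256 * Q2 - 21303/64 * Q3
          - 26487/64 * Q4 := by linarith
  have c2 : 6.827 ≤ 72819/1024 - 45603/256 * q - 118035/256 * Q2 + 45603/64 * Q3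
          + 72819/64 * Q4 := by linarith
  have c3 : -8.478 ≤ -39231/512 + 24039/128 * q + 63087/128 * Q2 - 24039/32 * Q3
          - 39231/32 * Q4 := by linarith
  have c4 : 2.568 ≤ 18441/512 - 12849/128 * q - 28217/128 * Q2 + 12849/32 * Q3
          + 18441/32 * Q4 := by linarith
  have c5 : -0.232 ≤ -7659/1024 + 6363/256 * q + 10251/256 * Q2 - 6363/64 * Q3
          - 7659/64 * Q4 := by linarith
  have c6 : 0 ≤ 567/1024 - 567/256 * q - 567/256 * Q2 + 567/64 * Q3 + 567/64 * Q4 := by linarith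
  have d1 := mul_le_mul_of_nonneg_right c1 hm
  have d2 := mul_le_mul_of_nonneg_right c2 (pow_nonneg hm 2)
  have d3 := mul_le_mul_of_nonneg_right c3 (pow_nonneg hm 3)
  have d4 := mul_le_mul_of_nonneg_right c4 (pow_nonneg hm 4)
  have d5 := mul_le_mul_of_nonneg_right c5 (pow_nonneg hm 5)
  have d6 := mul_nonneg c6 (pow_nonneg hm 6)
  have x0 : 0 ≤ m - 0.28 := by linarith
  have y0 : 0 ≤ 0.85 - m := by linarith
  have hp : 0 ≤ 0.028 - 0.877 * m + 6.827 * m ^ 2 - 8.478 * m ^ 3 + 2.568 * m ^ 4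
      - 0.232 * m ^ 5 := by
    nlinarith [pow_nonneg x0 5, pow_nonneg y0 5, mul_nonneg x0 (pow_nonneg y0 4),
      mul_nonneg (pow_nonneg x0 2) (pow_nonneg y0 3), mul_nonneg (pow_nonneg x0 3) (pow_nonneg y0 2),
      mul_nonneg (pow_nonneg x0 4) y0]
  linarith

lemma quad_lift {a b c x y : ℝ} (ha : 0 ≤ a) (hc : 0 ≤ c) (hx : 0 < x) (hxy : x ≤ y)
    (h : c + b * x ≤ a * x ^ 2) : c + b * y ≤ a * y ^ 2 := by
  have h1 : 0 ≤ a * x - b := by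
    by_contra hn
    push Not at hn
    nlinarith
  have h2 : a * x - b ≤ a * y - b := by nlinarith
  have := mul_le_mul hxy h2 h1 (by linarith)
  nlinarith

lemma core {q m g : ℝ} (h1 : 0.285398 < q) (h2 : q < 0.28539825) (hm0 : 0.28 ≤ m)
    (hm1 : m ≤ 1)
    (hg : q + (1 / 2 - q - 2 * q ^ 2) * (3 * (3 * m - 1) * (3 - m) / (16 * m)) ≤ g)
    (hg' : 0.85 ≤ m → 1 / 3 - 9 * (1 - m) ^ 2 / (64 * m) ≤ g) :
    32 * q ^ 2 * m ^ 2 * (1 + m) + 6 * (1 - 4 * q ^ 2) * m * (1 + m) * (3 * m - 1) * (3 - m) * g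
      ≤ (3 - m) ^ 2 * (63 * m ^ 2 - 31 * m + 4) * g ^ 2 := by
  have ha : 0 ≤ (3 - m) ^ 2 * (63 * m ^ 2 - 31 * m + 4) := by
    apply mul_nonneg (sq_nonneg _)
    nlinarith [sq_nonneg (126 * m - 31)]
  have hc : 0 ≤ 32 * q ^ 2 * m ^ 2 * (1 + m) := by
    have : 0 ≤ 1 + m := by linarith
    positivity
  have hmp : 0 < m := by linarith
  rcases le_total m 0.85 with hm | hm
  · refine quad_lift ha hc ?_ hg ?_
    · have hg : 1 / 2 - q - 2 * q ^ 2 < 0.0518 := by nlinarith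
      have hg' : 0 < 1 / 2 - q - 2 * q ^ 2 := by nlinarith
      generalize 1 / 2 - q - 2 * q ^ 2 = g1 at *
      have : -1 ≤ 3 * (3 * m - 1) * (3 - m) / (16 * m) := by
        rw [le_div_iff₀ (by linarith)]
        nlinarith
      nlinarith
    · have hr := rem_nonneg h1 h2 hm0 (by linarith)
      have hr2 := mul_nonneg (sq_nonneg (3 * m - 1)) hr
      have hG : q + (1 / 2 - q - 2 * q ^ 2) * (3 * (3 * m - 1) * (3 - m) / (16 * m))
        = (q * m + 3 / 16 * (1 / 2 - q - 2 * q ^ 2) * ((3 * m - 1) * (3 - m))) / m := by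
        field_simp
      rw [hG]
      set G := q * m + 3 / 16 * (1 / 2 - q - 2 * q ^ 2) * ((3 * m - 1) * (3 - m)) with hGd
      have hz : 32 * q ^ 2 * m ^ 4 * (1 + m)
          + 6 * (1 - 4 * q ^ 2) * m ^ 2 * (1 + m) * (3 * m - 1) * (3 - m) * G
          ≤ (3 - m) ^ 2 * (63 * m ^ 2 - 31 * m + 4) * G ^ 2 := by
        rw [← sub_nonneg]
        refine hr2.trans_eq ?_
        rw [hGd]
        ring
      have e1 : 32 * q ^ 2 * m ^ 2 * (1 + m)
          + 6 * (1 - 4 * q ^ 2) * m * (1 + m) * (3 * m - 1) * (3 - m) * (G / m)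
          = (32 * q ^ 2 * m ^ 4 * (1 + m)
          + 6 * (1 - 4 * q ^ 2) * m ^ 2 * (1 + m) * (3 * m - 1) * (3 - m) * G) / m ^ 2 := by
        field_simp
      rw [e1, div_pow, mul_div_assoc']
      exact div_le_div_of_nonneg_right hz (by positivity)
  · have hg2 := hg' (by linarith)
    have hb : 9 * (1 - m) ^ 2 / (64 * m) ≤ 0.03 * (1 - m) := by
      rw [div_le_iff₀ (by linarith)]
      nlinarith
    refine quad_lift ha hc (x := 1 / 3 - 0.03 * (1 - m)) (by linarith) (by linarith) ?_
    have b2 : q ^ 2 ≤ 0.08146 := by nlinarith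
    have b1 : 0.08145 ≤ q ^ 2 := by nlinarith
    generalize q ^ 2 = Q at *
    obtain ⟨u, rfl⟩ : ∃ u, m = 1 - u := ⟨1 - m, by ring⟩
    have hu0 : 0 ≤ u := by linarith
    have hu1 : u ≤ 0.155 := by linarith
    have hK : 32 * (1 - u) ^ 2 * (2 - u) ≤
      24 * (1 - u) * (2 - u) * (2 - 3 * u) * (2 + u) * (1 / 3 - 0.03 * u) + 100 * u := by
      nlinarith [pow_nonneg hu0 2, pow_nonneg hu0 3, pow_nonneg hu0 4, pow_nonneg hu0 5]
    have hK' := mul_le_mul_of_nonneg_left hK (sub_nonneg.2 b1)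
    have hD : u ≤ (2 + u) ^ 2 * (63 * (1 - u) ^ 2 - 31 * (1 - u) + 4) * (1 / 3 - 0.03 * u) ^ 2
        - 6 * (1 - 4 * 0.08145) * (1 - u) * (2 - u) * (2 - 3 * u) * (2 + u) * (1 / 3 - 0.03 * u)
        - 32 * 0.08145 * (1 - u) ^ 2 * (2 - u) := by
      have v0 : 0 ≤ 0.155 - u := by linarith
      nlinarith [mul_nonneg hu0 v0, mul_nonneg (pow_nonneg hu0 2) v0,
        mul_nonneg (pow_nonneg hu0 3) v0, mul_nonneg (pow_nonneg hu0 4) v0,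
        mul_nonneg (pow_nonneg hu0 5) v0, pow_nonneg hu0 2, pow_nonneg hu0 3, pow_nonneg hu0 4,
        pow_nonneg hu0 5, pow_nonneg hu0 6]
    have hsm : (Q - 0.08145) * (100 * u) ≤ 0.00001 * (100 * u) :=
      mul_le_mul_of_nonneg_right (by linarith) (by linarith)
    rw [show (1 : ℝ) - (1 - u) = u by ring, show (1 : ℝ) + (1 - u) = 2 - u by ring,
      show 3 * (1 - u) - 1 = 2 - 3 * u by ring, show 3 - (1 - u) = 2 + u by ring]
    linarith

lemma exists_param {ν E : ℝ} (h0 : 0 ≤ ν) (hν1 : ν ≤ 1) (hE0 : 0 < E) (hE2 : E ^ 2 = 9 + 4 * ν ^ 2) :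
    ∃ k, 0 < k ∧ 0.28 ≤ k ^ 2 ∧ k ^ 2 ≤ 1 ∧ (0.85 ≤ k ^ 2 → ν ≤ 1 / 8) ∧
      E = 3 * (1 + k ^ 2) / (2 * k) ∧ ν = 3 * (1 - k ^ 2) / (4 * k) := by
  have hlt : 2 * ν < E := by nlinarith
  have hk : 0 < (E - 2 * ν) / 3 := by linarith
  have hE4 : E ≤ 3.61 := by nlinarith
  refine ⟨(E - 2 * ν) / 3, hk, ?_, ?_, ?_, ?_, ?_⟩
  · have h1 : (E - 2 * ν) * (E + 2 * ν) = 9 := by linarith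
    have : 1.6 ≤ E - 2 * ν := by nlinarith
    nlinarith
  · nlinarith
  · intro h
    have : 2.76 ≤ E - 2 * ν := by nlinarith
    nlinarith
  · rw [eq_div_iff (by linarith)]; linarith
  · rw [eq_div_iff (by linarith)]; linarith

lemma F0 {ν E g w η : ℝ} (h0 : 0 ≤ ν) (hν1 : ν ≤ 1) (hE0 : 0 < E) (hE2 : E ^ 2 = 9 + 4 * ν ^ 2)
    (hgl : gl ν ≤ g) (hw : 1 - 2 * w = (3 - 4 * ν ^ 2) * g) (hη : η = 1 / ((E + 4 * ν) * g))
    (hg8 : ν ≤ 1 / 8 → 1 / 3 - ν ^ 2 / 4 ≤ g) :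
    196 * ν / E ≤ 40 - 36 * η ^ 2 + 16 * ν ^ 2
      + 36 * η ^ 2 * w * (2 * Real.pi - Real.pi ^ 2 / 2) - 4 * (E - 4 * ν) ^ 2 / 9 := by
  obtain ⟨h1, h2⟩ := q_bounds
  have hgp := (gl_pos h0 hν1).trans_le hgl
  unfold gl at hgl
  have hpi : Real.pi = 4 * ((Real.pi - 2) / 4) + 2 := by ring
  rw [hpi]
  clear hpi
  generalize (Real.pi - 2) / 4 = q at *
  obtain ⟨k, hk, hm0, hm1, hm8, hEk, hνk⟩ := exists_param h0 hν1 hE0 hE2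
  have hν2 : ν ^ 2 = 9 * (1 - k ^ 2) ^ 2 / (16 * k ^ 2) := by
    rw [hνk]; field_simp; ring
  have hd : 3 / 4 - ν ^ 2 = 3 * (3 * k ^ 2 - 1) * (3 - k ^ 2) / (16 * k ^ 2) := by
    rw [hν2]; field_simp; ring
  rw [hd] at hgl
  have hc := core h1 h2 hm0 hm1 hgl (fun h => by
    have := hg8 (hm8 h)
    rw [hν2] at this
    refine le_trans (le_of_eq ?_) this
    field_simp; ring)
  have h3m : 0 < 3 - k ^ 2 := by linarith
  have hη2 : η ^ 2 = 4 * k ^ 2 / (9 * (3 - k ^ 2) ^ 2 * g ^ 2) := by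
    have : E + 4 * ν = 3 * (3 - k ^ 2) / (2 * k) := by
      rw [hEk, hνk]; field_simp; ring
    rw [hη, this]; field_simp; norm_num
  have hw2 : 1 - w * (2 * (4 * q + 2) - (4 * q + 2) ^ 2 / 2)
      = 4 * q ^ 2 + (1 - 4 * q ^ 2) * (3 * (3 * k ^ 2 - 1) * (3 - k ^ 2) / (4 * k ^ 2)) * g := by
    have h4 : 3 * (3 * k ^ 2 - 1) * (3 - k ^ 2) / (4 * k ^ 2) = 3 - 4 * ν ^ 2 := by
      have : 3 * (3 * k ^ 2 - 1) * (3 - k ^ 2) / (4 * k ^ 2)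
        = 4 * (3 * (3 * k ^ 2 - 1) * (3 - k ^ 2) / (16 * k ^ 2)) := by
        field_simp; norm_num
      rw [this, ← hd]; ring
    rw [h4]
    linear_combination (1 - 4 * q ^ 2) * hw
  have hR : 40 + 16 * ν ^ 2 - 4 * (E - 4 * ν) ^ 2 / 9 - 196 * ν / E
      = 2 * (63 * (k ^ 2) ^ 2 - 31 * k ^ 2 + 4) / (k ^ 2 * (1 + k ^ 2)) := by
    rw [hEk, hνk]; field_simp; ring
  have hL : 36 * η ^ 2 * (1 - w * (2 * (4 * q + 2) - (4 * q + 2) ^ 2 / 2))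
      ≤ 2 * (63 * (k ^ 2) ^ 2 - 31 * k ^ 2 + 4) / (k ^ 2 * (1 + k ^ 2)) := by
    rw [hw2, hη2]
    generalize k ^ 2 = m at *
    have hmp : 0 < m := by linarith
    have hgp' : 0 < g := by linarith
    have e : 36 * (4 * m / (9 * (3 - m) ^ 2 * g ^ 2)) *
        (4 * q ^ 2 + (1 - 4 * q ^ 2) * (3 * (3 * m - 1) * (3 - m) / (4 * m)) * g)
        = 2 * (32 * q ^ 2 * m ^ 2 * (1 + m)
          + 6 * (1 - 4 * q ^ 2) * m * (1 + m) * (3 * m - 1) * (3 - m) * g)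
          / ((3 - m) ^ 2 * g ^ 2 * (m * (1 + m))) := by
      field_simp
      ring
    rw [e, div_le_div_iff₀ (by positivity) (by positivity)]
    have := mul_le_mul_of_nonneg_right hc (show 0 ≤ 2 * (m * (1 + m)) by positivity)
    linarith
  linarith

lemma eta_bound {ν E g : ℝ} (h0 : 0 ≤ ν) (hν1 : ν ≤ 1) (hE0 : 0 < E) (hE2 : E ^ 2 = 9 + 4 * ν ^ 2)
    (hgl : gl ν ≤ g) (hg8 : ν ≤ 1 / 8 → 1 / 3 - ν ^ 2 / 4 ≤ g) :
    1 + 1.06 * ν ≤ (E + 4 * ν) * g := by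
  obtain ⟨h1, h2⟩ := q_bounds
  have hE : 3 + 0.6 * ν ^ 2 ≤ E := by
    apply le_of_sq_le_sq _ hE0.le
    rw [hE2]
    have : ν ^ 2 ≤ 1 := by nlinarith
    nlinarith [sq_nonneg ν]
  have hgp := (gl_pos h0 hν1).trans_le hgl
  have hA : (3 + 0.6 * ν ^ 2 + 4 * ν) * g ≤ (E + 4 * ν) * g :=
    mul_le_mul_of_nonneg_right (by linarith) (by linarith)
  refine le_trans ?_ hA
  rcases le_total ν (1 / 8) with h | h
  · have := mul_le_mul_of_nonneg_left (hg8 h) (show 0 ≤ 3 + 0.6 * ν ^ 2 + 4 * ν by positivity)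
    refine le_trans ?_ this
    nlinarith [mul_nonneg h0 h0, mul_nonneg (mul_nonneg h0 h0) (sub_nonneg.2 h)]
  · have hl : 0.32417 - 0.0517 * ν ^ 2 ≤ gl ν := by
      unfold gl
      have hν2 : ν ^ 2 ≤ 1 := by nlinarith
      have hq1 := mul_self_le_mul_self (by norm_num) h1.le
      have hq2 := mul_self_le_mul_self (by linarith) h2.le
      generalize (Real.pi - 2) / 4 = q at *
      have hg1 : 1 / 2 - q - 2 * q ^ 2 ≤ 0.0517 := by nlinarith
      have hg2 := mul_le_mul_of_nonneg_right hg1 (sq_nonneg ν)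
      nlinarith
    have := mul_le_mul_of_nonneg_left (hl.trans hgl)
      (show 0 ≤ 3 + 0.6 * ν ^ 2 + 4 * ν by positivity)
    refine le_trans ?_ this
    have hx := sub_nonneg.2 h
    have hy := sub_nonneg.2 hν1
    nlinarith [mul_nonneg hx hy, mul_nonneg (mul_nonneg hx hy) h0,
      mul_nonneg (mul_nonneg hx hy) (mul_nonneg h0 h0)]

lemma sqrt_small {ν E t : ℝ} (h0 : 0 ≤ ν) (hν1 : ν ≤ 1) (hE0 : 0 < E)
    (hE2 : E ^ 2 = 9 + 4 * ν ^ 2) (ht : 0 ≤ t) :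
    Real.sqrt (4 * ν ^ 2 + (1 + t) * (1 + 4 * t) * (9 + 4 * t))
      ≤ E + 49 / (2 * E) * t + 1.4 * t ^ 2 := by
  rw [Real.sqrt_le_left (by positivity)]
  have hE3 : 3 ≤ E := by nlinarith
  have hE4 : E ≤ 3.606 := by nlinarith
  obtain ⟨a, ha⟩ : ∃ a, a = 49 / (2 * E) := ⟨_, rfl⟩
  have hEa : 2 * E * a = 49 := by rw [ha]; field_simp
  rw [← ha]
  have ha0 : 6.79 ≤ a := by
    rw [ha, le_div_iff₀ (by linarith)]; linarith
  have hq : 56 ≤ 2.8 * E + a ^ 2 := by nlinarith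
  have e : (E + a * t + 1.4 * t ^ 2) ^ 2 = E ^ 2 + 2 * E * a * t + (2.8 * E + a ^ 2) * t ^ 2
      + 2.8 * a * t ^ 3 + 1.96 * t ^ 4 := by ring
  rw [e, hE2, hEa]
  have := mul_le_mul_of_nonneg_right hq (sq_nonneg t)
  have := mul_le_mul_of_nonneg_right ha0 (pow_nonneg ht 3)
  nlinarith [pow_nonneg ht 3, pow_nonneg ht 4]

lemma sqrt_large {ν t : ℝ} (h0 : 0 ≤ ν) (hν1 : ν ≤ 1) (ht : 2.2 ≤ t) :
    8 * Real.sqrt (4 * ν ^ 2 + (1 + t) * (1 + 4 * t) * (9 + 4 * t))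
      ≤ (9 + 4 * t) * (3.04 * t + 3.2) + 7.1 * t := by
  have ht0 : 0 ≤ t := by linarith
  have : Real.sqrt (4 * ν ^ 2 + (1 + t) * (1 + 4 * t) * (9 + 4 * t))
      ≤ ((9 + 4 * t) * (3.04 * t + 3.2) + 7.1 * t) / 8 := by
    rw [Real.sqrt_le_left (by positivity)]
    have hν2 : ν ^ 2 ≤ 1 := by nlinarith
    have hx := sub_nonneg.2 ht
    nlinarith [pow_nonneg hx 2, pow_nonneg hx 3, pow_nonneg hx 4]
  linarith

lemma small_case {ν E w X t S : ℝ} (h0 : 0 ≤ ν) (hν1 : ν ≤ 1) (hE0 : 0 < E)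
    (hE2 : E ^ 2 = 9 + 4 * ν ^ 2) (hw0 : 0 ≤ w) (hw1 : w ≤ 0.637) (hw2 : ν ≤ 1 / 2 → w ≤ ν ^ 2)
    (hX0 : 0 ≤ X) (hX : X * (1 + 1.06 * ν) ^ 2 ≤ 1) (hN : 9 * X * (1 - 2 * w) ^ 2 = (E - 4 * ν) ^ 2)
    (hF : 196 * ν / E ≤ 40 - 36 * X + 16 * ν ^ 2
      + 36 * X * w * (2 * Real.pi - Real.pi ^ 2 / 2) - 4 * (E - 4 * ν) ^ 2 / 9)
    (ht : 0 ≤ t) (ht2 : t ≤ 2.2)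
    (hS : 1 + (2 * Real.pi - Real.pi ^ 2 / 2) * t - 19 / 50 * t ^ 2 ≤ S) :
    0 ≤ (1 - X) * (1 + 4 * t) * (9 + 4 * t) + 4 * ν ^ 2 * (5 + 4 * t)
    + 4 * X * (9 + 4 * t) * S * w - 4 * X * (9 + 4 * t) * w ^ 2
    - 8 * ν * Real.sqrt (4 * ν ^ 2 + (1 + t) * (1 + 4 * t) * (9 + 4 * t)) := by
  have hT : 1.3483 ≤ 2 * Real.pi - Real.pi ^ 2 / 2 := by
    nlinarith [Real.pi_gt_d6, Real.pi_lt_d6]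
  generalize 2 * Real.pi - Real.pi ^ 2 / 2 = T at *
  have hsq := mul_le_mul_of_nonneg_left (sqrt_small h0 hν1 hE0 hE2 ht) (show 0 ≤ 8 * ν by linarith)
  have hS' := mul_le_mul_of_nonneg_left hS (show 0 ≤ 4 * X * (9 + 4 * t) * w by positivity)
  have hF' := mul_le_mul_of_nonneg_right hF ht
  have hfr : 8 * ν * (49 / (2 * E) * t) = 196 * ν / E * t := by field_simp; ring
  have hXw : 0 ≤ X * w := mul_nonneg hX0 hw0
  have hm : 11.2 * ν ≤ 16 * (1 - X) + 4 * (X * w) * (4 * T - 9 * (19 / 50) - 4 * (19 / 50) * t) := by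
    have hb : -1.3709 ≤ 4 * T - 9 * (19 / 50) - 4 * (19 / 50) * t := by linarith
    have hb' := mul_le_mul_of_nonneg_left hb (show 0 ≤ 4 * (X * w) by linarith)
    have : X * (16 + 5.49 * w) ≤ 16 - 11.2 * ν := by
      have hp : 0 < (1 + 1.06 * ν) ^ 2 := by positivity
      have hc : 16 + 5.49 * w ≤ (16 - 11.2 * ν) * (1 + 1.06 * ν) ^ 2 := by
        rcases le_total ν (1 / 2) with h | h
        · have := hw2 h
          nlinarith [mul_nonneg h0 (sub_nonneg.2 h), mul_nonneg (mul_nonneg h0 h0) (sub_nonneg.2 h)]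
        · have hx := sub_nonneg.2 h
          have hy := sub_nonneg.2 hν1
          nlinarith [mul_nonneg hx hy, mul_nonneg (mul_nonneg hx hy) h0]
      have h1 := mul_le_mul_of_nonneg_left hc hX0
      have h2 := mul_le_mul_of_nonneg_right hX (show 0 ≤ 16 - 11.2 * ν by linarith)
      linarith
    nlinarith
  have hm' := mul_le_mul_of_nonneg_right hm (sq_nonneg t)
  have key : (1 - X) * (1 + 4 * t) * (9 + 4 * t) + 4 * ν ^ 2 * (5 + 4 * t)
    + 4 * X * (9 + 4 * t) * w * (1 + T * t - 19 / 50 * t ^ 2) - 4 * X * (9 + 4 * t) * w ^ 2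
    = 8 * ν * E + (40 - 36 * X + 16 * ν ^ 2 + 36 * X * w * T - 4 * (E - 4 * ν) ^ 2 / 9) * t
      + (16 * (1 - X) + 4 * (X * w) * (4 * T - 9 * (19 / 50) - 4 * (19 / 50) * t)) * t ^ 2 := by
    linear_combination (-(1 : ℝ) - 4 / 9 * t) * hN - hE2
  linarith

lemma large_case {ν E w X t S : ℝ} (h0 : 0 ≤ ν) (hν1 : ν ≤ 1) (hE0 : 0 < E)
    (hE2 : E ^ 2 = 9 + 4 * ν ^ 2) (hw0 : 0 ≤ w)
    (hX0 : 0 ≤ X) (hX : X * (1 + 1.06 * ν) ^ 2 ≤ 1) (hN : 9 * X * (1 - 2 * w) ^ 2 = (E - 4 * ν) ^ 2)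
    (ht : 2.2 ≤ t) (hS : 1 ≤ S) :
    0 ≤ (1 - X) * (1 + 4 * t) * (9 + 4 * t) + 4 * ν ^ 2 * (5 + 4 * t)
    + 4 * X * (9 + 4 * t) * S * w - 4 * X * (9 + 4 * t) * w ^ 2
    - 8 * ν * Real.sqrt (4 * ν ^ 2 + (1 + t) * (1 + 4 * t) * (9 + 4 * t)) := by
  have ht0 : 0 ≤ t := by linarith
  have hsq := mul_le_mul_of_nonneg_left (sqrt_large h0 hν1 ht) h0
  have hS' := mul_le_mul_of_nonneg_left hS (show 0 ≤ 4 * X * (9 + 4 * t) * w by positivity)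
  have hE : 2.4 + 1.2 * ν ≤ E := by
    apply le_of_sq_le_sq _ hE0.le
    rw [hE2]
    nlinarith [sq_nonneg (1.6 * ν - 1.8)]
  have hX1 : ν * (1.26 - 0.5 * ν) ≤ 1 - X := by
    have hc : 1 ≤ (1 - ν * (1.26 - 0.5 * ν)) * (1 + 1.06 * ν) ^ 2 := by
      have hy := sub_nonneg.2 hν1
      nlinarith [mul_nonneg h0 hy, mul_nonneg (mul_nonneg h0 hy) h0,
        mul_nonneg (mul_nonneg h0 hy) (mul_nonneg h0 h0), mul_nonneg (mul_nonneg h0 hy) hy,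
        mul_nonneg (mul_nonneg h0 hy) (mul_nonneg hy hy)]
    have hp : 0 < (1 + 1.06 * ν) ^ 2 := by positivity
    have := le_of_mul_le_mul_right (hX.trans hc) hp
    linarith
  have hX2 := mul_le_mul_of_nonneg_right hX1 (show 0 ≤ 4 * t * (9 + 4 * t) by positivity)
  have hE' := mul_le_mul_of_nonneg_left hE (show 0 ≤ 8 / 9 * ν * (9 + 4 * t) by positivity)
  have key : (1 - X) * (1 + 4 * t) * (9 + 4 * t) + 4 * ν ^ 2 * (5 + 4 * t)
    + 4 * X * (9 + 4 * t) * w * 1 - 4 * X * (9 + 4 * t) * w ^ 2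
    = (1 - X) * (4 * t * (9 + 4 * t)) + 8 / 9 * ν * (9 + 4 * t) * E + 64 / 9 * ν ^ 2 * t := by
    linear_combination (-(1 : ℝ) - 4 / 9 * t) * hN - (1 + 4 / 9 * t) * hE2
  have hfin : 0 ≤ ν * ((9 + 4 * t) * (4 * t * (1.26 - 0.5 * ν) + 8 / 9 * (2.4 + 1.2 * ν))
      + 64 / 9 * ν * t - ((9 + 4 * t) * (3.04 * t + 3.2) + 7.1 * t)) := by
    apply mul_nonneg h0
    have hy := sub_nonneg.2 hν1
    have hz := sub_nonneg.2 ht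
    nlinarith [mul_nonneg hy hz, mul_nonneg hy (mul_nonneg hz hz), mul_nonneg hy ht0,
      mul_nonneg hy (mul_nonneg ht0 ht0)]
  linarith

/-- For every τ ∈ [0,∞) and ν ∈ [0,1] one has p(τ,ν) ≥ 0. -/
theorem pfun_nonneg (τ ν : ℝ) (hτ : 0 ≤ τ) (hν : ν ∈ Set.Icc (0 : ℝ) 1) :
    0 ≤ pfun τ ν := by
  obtain ⟨h0, hν1⟩ := hν
  obtain ⟨g, hgl, hw, hη, hg8⟩ := eta_facts h0 hν1
  have hE2 : Real.sqrt (9 + 4 * ν ^ 2) ^ 2 = 9 + 4 * ν ^ 2 := Real.sq_sqrt (by positivity)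
  have hE0 : 0 < Real.sqrt (9 + 4 * ν ^ 2) := Real.sqrt_pos.2 (by positivity)
  generalize Real.sqrt (9 + 4 * ν ^ 2) = E at *
  have hgp := (gl_pos h0 hν1).trans_le hgl
  have hg0 : 0 < g := by linarith
  have hF := F0 h0 hν1 hE0 hE2 hgl hw hη hg8
  have hb := eta_bound h0 hν1 hE0 hE2 hgl hg8
  have hpos : 0 < (E + 4 * ν) * g := by positivity
  have hη1 : eta ν * ((E + 4 * ν) * g) = 1 := by rw [hη]; field_simp
  have hη0 : 0 < eta ν := by rw [hη]; positivity
  have hX : eta ν ^ 2 * (1 + 1.06 * ν) ^ 2 ≤ 1 := by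
    have h1 : eta ν * (1 + 1.06 * ν) ≤ 1 := by
      calc eta ν * (1 + 1.06 * ν) ≤ eta ν * ((E + 4 * ν) * g) :=
            mul_le_mul_of_nonneg_left hb hη0.le
        _ = 1 := hη1
    have h2 : 0 ≤ eta ν * (1 + 1.06 * ν) := by positivity
    rw [← mul_pow]
    exact pow_le_one₀ h2 h1
  have hN : 9 * eta ν ^ 2 * (1 - 2 * w ν) ^ 2 = (E - 4 * ν) ^ 2 := by
    have h3 : 3 * eta ν * (1 - 2 * w ν) = E - 4 * ν := by
      have hne : E + 4 * ν ≠ 0 := by positivity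
      rw [hw, hη]
      field_simp
      linear_combination -hE2
    rw [← h3]; ring
  unfold pfun
  rcases le_total (τ ^ 2) 2.2 with ht | ht
  · exact small_case h0 hν1 hE0 hE2 (w_nonneg h0 hν1) (w_le h0 hν1) (fun h => w_le_sq h0 h)
      (sq_nonneg _) hX hN hF (sq_nonneg τ) ht (S_ge τ hτ)
  · exact large_case h0 hν1 hE0 hE2 (w_nonneg h0 hν1) (sq_nonneg _) hX hN ht
      (S_ge_one τ (by nlinarith))
end
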